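/- Let Ξ be a measurable space, X a nonempty set, and f : X × Ξ → ℝ. Let 𝒫₁ and 𝒫₂ be nonempty sets of probability measures on Ξ such that f(x,·) is integrable with respect to every Q ∈ 𝒫₁ ∪ 𝒫₂ for every x ∈ X, and suppose there is C ≥ 0 with |∫ f(x,·) dQ| ≤ C for all x ∈ X and all Q ∈ 𝒫₁ ∪ 𝒫₂. Define the distributionally robust optimal values v_i := inf_{x∈X} sup_{Q∈𝒫_i} ∫ f(x,·) dQ for i = 1, 2. Then |v₁ − v₂| ≤ ℍ(𝒫₁,𝒫₂). -/

import Mathlib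

open MeasureTheory

/-- The pseudometric `𝕕(P₁,P₂) = sup_{x ∈ X} |∫ f(x,·) dP₁ − ∫ f(x,·) dP₂|`. -/
noncomputable def pseudoDist {Ξ X : Type*} [MeasurableSpace Ξ] (f : X → Ξ → ℝ)
    (P₁ P₂ : Measure Ξ) : ℝ :=
  ⨆ x : X, |(∫ ξ, f x ξ ∂P₁) - ∫ ξ, f x ξ ∂P₂|

/-- The Hausdorff distance `ℍ(𝒫₁,𝒫₂)` between two sets of measures under `pseudoDist`. -/
noncomputable def hausdorffDistSets {Ξ X : Type*} [MeasurableSpace Ξ] (f : X → Ξ → ℝ)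
    (𝒜₁ 𝒜₂ : Set (Measure Ξ)) : ℝ :=
  max (⨆ Q : 𝒜₁, ⨅ P : 𝒜₂, pseudoDist f (Q : Measure Ξ) (P : Measure Ξ))
      (⨆ Q : 𝒜₂, ⨅ P : 𝒜₁, pseudoDist f (Q : Measure Ξ) (P : Measure Ξ))

/-- Abstract one-sided comparison of two bounded min-max values. -/
theorem minmax_one_side {X A B : Type*} [Nonempty X] [Nonempty A] [Nonempty B]
    (g : X → A → ℝ) (h : X → B → ℝ) (C : ℝ)
    (hg : ∀ x a, |g x a| ≤ C) (hh : ∀ x b, |h x b| ≤ C) :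
    (⨅ x, ⨆ a, g x a) - (⨅ x, ⨆ b, h x b) ≤ ⨆ a, ⨅ b, ⨆ x, |g x a - h x b| := by
  have hd : ∀ x a b, |g x a - h x b| ≤ 2 * C := fun x a b => by
    have := abs_sub (g x a) (h x b)
    linarith [hg x a, hh x b]
  have bx : ∀ a b, BddAbove (Set.range fun x => |g x a - h x b|) := fun a b =>
    ⟨2 * C, by rintro _ ⟨x, rfl⟩; exact hd x a b⟩
  have bb : ∀ a, BddBelow (Set.range fun b => ⨆ x, |g x a - h x b|) := fun a =>
    ⟨0, by rintro _ ⟨b, rfl⟩; exact Real.iSup_nonneg fun x => abs_nonneg _⟩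
  have ba : BddAbove (Set.range fun a => ⨅ b, ⨆ x, |g x a - h x b|) :=
    ⟨2 * C, by
      rintro _ ⟨a, rfl⟩
      exact (ciInf_le (bb a) (Classical.arbitrary B)).trans (ciSup_le fun x => hd x a _)⟩
  have bga : ∀ x, BddAbove (Set.range fun a => g x a) := fun x =>
    ⟨C, by rintro _ ⟨a, rfl⟩; exact (abs_le.mp (hg x a)).2⟩
  have bhb : ∀ x, BddAbove (Set.range fun b => h x b) := fun x =>
    ⟨C, by rintro _ ⟨b, rfl⟩; exact (abs_le.mp (hh x b)).2⟩
  have bgx : BddBelow (Set.range fun x => ⨆ a, g x a) :=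
    ⟨-C, by
      rintro _ ⟨x, rfl⟩
      exact (abs_le.mp (hg x (Classical.arbitrary A))).1.trans (le_ciSup (bga x) _)⟩
  suffices H : (⨅ x, ⨆ a, g x a) - (⨆ a, ⨅ b, ⨆ x, |g x a - h x b|) ≤ ⨅ x, ⨆ b, h x b by
    linarith
  refine le_ciInf fun x => ?_
  have h1 := ciInf_le bgx x
  have h2 : (⨆ a, g x a) ≤ (⨆ b, h x b) + ⨆ a, ⨅ b, ⨆ x, |g x a - h x b| := by
    refine ciSup_le fun a => ?_
    have h3 := le_ciSup ba a
    have h4 : g x a - (⨆ b, h x b) ≤ ⨅ b, ⨆ x, |g x a - h x b| := by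
      refine le_ciInf fun b => ?_
      have h5 := le_ciSup (bx a b) x
      have h6 := le_ciSup (bhb x) b
      have h7 := le_abs_self (g x a - h x b)
      linarith
    linarith
  linarith

/-- The difference between two DRO optimal values is bounded by the Hausdorff distance
between the corresponding ambiguity sets. -/
theorem dro_optimal_value_diff_le_hausdorff
    {Ξ X : Type*} [MeasurableSpace Ξ] [Nonempty X]
    (f : X → Ξ → ℝ)
    (𝒜₁ 𝒜₂ : Set (Measure Ξ)) (h₁ : 𝒜₁.Nonempty) (h₂ : 𝒜₂.Nonempty)
    (hprob : ∀ Q ∈ 𝒜₁ ∪ 𝒜₂, IsProbabilityMeasure Q)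
    (hint : ∀ x : X, ∀ Q ∈ 𝒜₁ ∪ 𝒜₂, Integrable (f x) Q)
    (C : ℝ) (hC : 0 ≤ C)
    (hb : ∀ x : X, ∀ Q ∈ 𝒜₁ ∪ 𝒜₂, |∫ ξ, f x ξ ∂Q| ≤ C)
    (v₁ v₂ : ℝ)
    (hv₁ : v₁ = ⨅ x : X, ⨆ Q : 𝒜₁, ∫ ξ, f x ξ ∂(Q : Measure Ξ))
    (hv₂ : v₂ = ⨅ x : X, ⨆ Q : 𝒜₂, ∫ ξ, f x ξ ∂(Q : Measure Ξ)) :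
    |v₁ - v₂| ≤ hausdorffDistSets f 𝒜₁ 𝒜₂ := by
  have := h₁.to_subtype
  have := h₂.to_subtype
  have b1 : ∀ (x : X) (Q : 𝒜₁), |∫ ξ, f x ξ ∂(Q : Measure Ξ)| ≤ C :=
    fun x Q => hb x Q (Or.inl Q.2)
  have b2 : ∀ (x : X) (Q : 𝒜₂), |∫ ξ, f x ξ ∂(Q : Measure Ξ)| ≤ C :=
    fun x Q => hb x Q (Or.inr Q.2)
  have k1 := minmax_one_side _ _ C b1 b2
  have k2 := minmax_one_side _ _ C b2 b1
  rw [← hv₁, ← hv₂] at k1 k2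
  unfold hausdorffDistSets pseudoDist
  rw [abs_le']
  exact ⟨k1.trans (le_max_left _ _), by rw [neg_sub]; exact k2.trans (le_max_right _ _)⟩
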